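/- arXiv:1509.04900 — 3 statements merged into one kernel-verified Lean document; each statement's English description precedes it below -/
import Mathlib

section
/- Let β ∈ (1,2) be the largest positive root of x⁴ − 2x³ + x − 1 = 0 (β ≈ 1.8668). Then dim_H(U_β) = log G / log β, where G = (1+√5)/2 is the golden mean. -/
/-- The value `Σ_{n≥1} a_n β^{-n}` of a digit sequence (indexed from 0, so `a i = a_{i+1}`). -/
noncomputable def betaVal (β : ℝ) (a : ℕ → ℕ) : ℝ := ∑' n : ℕ, (a n : ℝ) / β ^ (n + 1)

/-- `Ũ_β`: the set of 0-1 sequences that are the unique β-expansion of their value. -/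
def UTilde (β : ℝ) : Set (ℕ → ℕ) :=
  {a | (∀ n, a n ≤ 1) ∧
    ∀ b : ℕ → ℕ, (∀ n, b n ≤ 1) → betaVal β b = betaVal β a → b = a}

/-- The word `w` occurs in the sequence `x` starting at position `n`. -/
def OccursAt (w : List ℕ) (x : ℕ → ℕ) (n : ℕ) : Prop :=
  ∀ i : Fin w.length, x (n + i.1) = w.get i

/-- `Y` is a subshift of finite type inside the ambient full shift `{0,1}^ℕ`: there is a
finite set `F` of forbidden words such that `Y` consists exactly of the 0-1 sequences in
which no word of `F` occurs. -/
def IsSFT01 (Y : Set (ℕ → ℕ)) : Prop :=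
  ∃ F : Set (List ℕ), F.Finite ∧
    Y = {x | (∀ n, x n ≤ 1) ∧ ∀ w ∈ F, ∀ n, ¬ OccursAt w x n}

/-- Strict lexicographic order on sequences. -/
def LexLt (a b : ℕ → ℕ) : Prop :=
  ∃ n, (∀ k < n, a k = b k) ∧ a n < b n

/-- `η` is the quasi-greedy expansion of `1` in base `β`: the lexicographically largest
0-1 sequence with infinitely many digits `1` whose value is `1`. -/
def QuasiGreedy (β : ℝ) (η : ℕ → ℕ) : Prop :=
  (∀ n, η n ≤ 1) ∧ (∀ N, ∃ n ≥ N, η n = 1) ∧ betaVal β η = 1 ∧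
    ∀ ζ : ℕ → ℕ, (∀ n, ζ n ≤ 1) → (∀ N, ∃ n ≥ N, ζ n = 1) →
      betaVal β ζ = 1 → ζ ≠ η → LexLt ζ η

/-- The univoque set `U_β`: points of `[0, 1/(β-1)]` with a unique β-expansion. -/
def Uset (β : ℝ) : Set ℝ :=
  {x | x ∈ Set.Icc 0 (1 / (β - 1)) ∧
    ∃! a : ℕ → ℕ, (∀ n, a n ≤ 1) ∧ betaVal β a = x}

/-!
For `β` in the range considered, up to countably many affine images the univoque sequences are
exactly the binary sequences with no three consecutive equal digits. If `a` is univoque and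
`a n = 0`, the tail after position `n` has value less than `1`; together with its mirror image this
forbids the words `0111` and `1000`, so that no triple can follow a change of digit. Conversely the
largest value of a sequence without triples is that of `110110110…`, which is less than `1` as soon
as `β ^ 3 > β ^ 2 + β + 1`, and this makes such sequences univoque.

Sequences without triples have at most `2 * fib (n + 1)` prefixes of length `n`, which bounds the
dimension from above. For the lower bound, mark by `1` the positions where a digit is repeated:
sequences without triples become sequences without two adjacent `1`s, that is golden mean
expansions, and these fill `[0, 1)`. Two sequences that first differ at position `n` have
`β`-values at distance at least a multiple of `β ^ (-n)`, while the golden mean values of their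
markings are at distance at most a multiple of `φ ^ (-n)`, so `[0, 1)` is the image of a part of
`U_β` under a Hölder map of exponent `log φ / log β`.
-/

open Filter Topology MeasureTheory
open scoped goldenRatio ENNReal NNReal

namespace BetaExpansion

/-! ### Hausdorff dimension -/

section Dimension

theorem hausdorffMeasure_le_of_cover_Icc {E : Set ℝ} {S : ℕ → Set ℝ} {r : ℕ → ℝ} {s C : ℝ}
    (hs : 0 ≤ s) (hr₀ : ∀ n, 0 ≤ r n) (hr : Tendsto r atTop (𝓝 0)) (hfin : ∀ n, (S n).Finite)
    (hcard : ∀ n, (S n).ncard * r n ^ s ≤ C) (hcover : ∀ n, E ⊆ ⋃ p ∈ S n, Set.Icc p (p + r n)) :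
    μH[s] E ≤ ENNReal.ofReal C := by
  have (n : ℕ) : Fintype (S n) := (hfin n).fintype
  have hdiam (n : ℕ) (p : S n) :
      Metric.ediam (Set.Icc (p : ℝ) (p + r n)) = ENNReal.ofReal (r n) := by
    rw [Real.ediam_Icc, add_sub_cancel_left]
  refine (Measure.hausdorffMeasure_le_liminf_sum s E (fun n => ENNReal.ofReal (r n))
    (by simpa using ENNReal.tendsto_ofReal hr) (fun n (p : S n) => Set.Icc (p : ℝ) (p + r n))
    (.of_forall fun n p => (hdiam n p).le)
    (.of_forall fun n => by simpa only [Set.iUnion_coe_set] using hcover n)).trans ?_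
  refine liminf_le_of_le (by isBoundedDefault) fun b hb => ?_
  obtain ⟨n, hn⟩ := hb.exists
  refine hn.trans ?_
  simp only [hdiam, Finset.sum_const, nsmul_eq_mul, Finset.card_univ, ← Nat.card_eq_fintype_card,
    Nat.card_coe_set_eq]
  rw [ENNReal.ofReal_rpow_of_nonneg (hr₀ n) hs, ← ENNReal.ofReal_natCast,
    ← ENNReal.ofReal_mul (by positivity)]
  exact ENNReal.ofReal_le_ofReal (hcard n)

theorem dimH_le_of_cover_Icc {E : Set ℝ} {S : ℕ → Set ℝ} {r : ℕ → ℝ} {s C : ℝ}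
    (hs : 0 ≤ s) (hr₀ : ∀ n, 0 ≤ r n) (hr : Tendsto r atTop (𝓝 0)) (hfin : ∀ n, (S n).Finite)
    (hcard : ∀ n, (S n).ncard * r n ^ s ≤ C) (hcover : ∀ n, E ⊆ ⋃ p ∈ S n, Set.Icc p (p + r n)) :
    dimH E ≤ ENNReal.ofReal s := by
  refine dimH_le_of_hausdorffMeasure_ne_top (d := s.toNNReal) ?_
  rw [Real.coe_toNNReal s hs]
  exact ne_top_of_le_ne_top ENNReal.ofReal_ne_top
    (hausdorffMeasure_le_of_cover_Icc hs hr₀ hr hfin hcard hcover)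

theorem dimH_image_le_div_of_edist_le {ι X Y : Type*} [EMetricSpace X] [EMetricSpace Y]
    {f : ι → X} {g : ι → Y} {A : Set ι} {C s : ℝ≥0} (hs : 0 < s)
    (h : ∀ a ∈ A, ∀ b ∈ A, edist (g a) (g b) ≤ C * edist (f a) (f b) ^ (s : ℝ)) :
    dimH (g '' A) ≤ dimH (f '' A) / s := by
  rcases A.eq_empty_or_nonempty with rfl | ⟨a₀, -⟩
  · simp
  have : Nonempty ι := ⟨a₀⟩
  let inv : X → ι := Function.invFunOn f A
  have inv_mem {x : X} (hx : x ∈ f '' A) : inv x ∈ A := Function.invFunOn_mem hx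
  have f_inv {x : X} (hx : x ∈ f '' A) : f (inv x) = x := Function.invFunOn_eq hx
  have holder : HolderOnWith C s (g ∘ inv) (f '' A) := fun x hx y hy => by
    simpa only [Function.comp_apply, f_inv hx, f_inv hy] using h _ (inv_mem hx) _ (inv_mem hy)
  have subset : g '' A ⊆ (g ∘ inv) '' (f '' A) := by
    rintro _ ⟨a, ha, rfl⟩
    have hfa := Set.mem_image_of_mem f ha
    refine ⟨f a, hfa, edist_le_zero.1 ?_⟩
    simpa [f_inv hfa, hs] using h _ (inv_mem hfa) a ha
  exact (dimH_mono subset).trans (holder.dimH_image_le hs)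

end Dimension

/-! ### Binary sequences -/

/-- A sequence of digits in `{0, 1}`, encoded as in `UTilde` and `Uset` by natural numbers. -/
def IsBinary (a : ℕ → ℕ) : Prop := ∀ n, a n ≤ 1

/-- The left shift by `k` places, which forgets the first `k` digits. -/
def shift (k : ℕ) (a : ℕ → ℕ) : ℕ → ℕ := fun n => a (n + k)

/-- The sequence with first digit `d` followed by `a`. -/
def cons (d : ℕ) (a : ℕ → ℕ) : ℕ → ℕ
  | 0 => d
  | n + 1 => a n

/-- The digitwise reflection `0 ↔ 1`, an involution of the binary sequences. -/
def reflect (a : ℕ → ℕ) : ℕ → ℕ := fun n => 1 - a n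

/-- Binary sequences in which neither `000` nor `111` occurs. -/
structure TripleFree (a : ℕ → ℕ) : Prop where
  isBinary : IsBinary a
  not_triple : ∀ n, ¬ (a n = a (n + 1) ∧ a (n + 1) = a (n + 2))

variable {a b : ℕ → ℕ}

theorem IsBinary.eq_zero_or_eq_one (ha : IsBinary a) (n : ℕ) : a n = 0 ∨ a n = 1 :=
  Nat.le_one_iff_eq_zero_or_eq_one.1 (ha n)

theorem IsBinary.shift (ha : IsBinary a) (k : ℕ) : IsBinary (shift k a) := fun n => ha (n + k)

theorem IsBinary.cons (ha : IsBinary a) {d : ℕ} (hd : d ≤ 1) : IsBinary (cons d a)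
  | 0 => hd
  | n + 1 => ha n

theorem isBinary_reflect (a : ℕ → ℕ) : IsBinary (reflect a) := fun n => Nat.sub_le 1 (a n)

theorem IsBinary.reflect_reflect (ha : IsBinary a) : reflect (reflect a) = a :=
  funext fun n => Nat.sub_sub_self (ha n)

theorem shift_shift (j k : ℕ) (a : ℕ → ℕ) : shift j (shift k a) = shift (j + k) a :=
  funext fun n => congrArg a (Nat.add_assoc n j k)

theorem TripleFree.shift (ha : TripleFree a) (k : ℕ) : TripleFree (shift k a) where
  isBinary := ha.isBinary.shift k
  not_triple n := by
    simpa only [BetaExpansion.shift, Nat.add_right_comm n _ k] using ha.not_triple (n + k)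

theorem TripleFree.reflect (ha : TripleFree a) : TripleFree (reflect a) where
  isBinary := isBinary_reflect a
  not_triple n := by
    have := ha.not_triple n
    have := ha.isBinary n
    have := ha.isBinary (n + 1)
    have := ha.isBinary (n + 2)
    simp only [BetaExpansion.reflect]
    omega

/-! ### Values of binary sequences -/

/-- The value of the prefix of length `n` of `a`, a partial sum of `betaVal β a`. -/
noncomputable def prefixVal (β : ℝ) (n : ℕ) (a : ℕ → ℕ) : ℝ :=
  ∑ i ∈ Finset.range n, (a i : ℝ) / β ^ (i + 1)

theorem prefixVal_succ (β : ℝ) (n : ℕ) (a : ℕ → ℕ) :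
    prefixVal β (n + 1) a = (a 0 + prefixVal β n (shift 1 a)) / β := by
  simp only [prefixVal, Finset.sum_range_succ', zero_add, pow_one]
  rw [add_comm, add_div, Finset.sum_div]
  simp only [shift, pow_succ, div_div]

theorem prefixVal_congr {β : ℝ} {n : ℕ} (h : ∀ i < n, a i = b i) :
    prefixVal β n a = prefixVal β n b :=
  Finset.sum_congr rfl fun i hi => by rw [h i (Finset.mem_range.1 hi)]

section Values

variable {β : ℝ} (hβ : 1 < β)
include hβ

theorem hasSum_one_div_pow_succ : HasSum (fun n : ℕ => 1 / β ^ (n + 1)) (1 / (β - 1)) := by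
  have hβ₀ : 0 < β := by linarith
  have geometric := (hasSum_geometric_of_lt_one (r := β⁻¹) (by positivity)
    (inv_lt_one_of_one_lt₀ hβ)).mul_left β⁻¹
  have sum_eq : β⁻¹ * (1 - β⁻¹)⁻¹ = 1 / (β - 1) := by
    rw [← mul_inv, mul_sub, mul_one, mul_inv_cancel₀ hβ₀.ne', one_div]
  have term_eq (n : ℕ) : β⁻¹ * β⁻¹ ^ n = 1 / β ^ (n + 1) := by
    rw [← pow_succ', inv_pow, one_div]
  simpa only [sum_eq, term_eq] using geometric

theorem IsBinary.digit_div_le (ha : IsBinary a) (n : ℕ) :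
    (a n : ℝ) / β ^ (n + 1) ≤ 1 / β ^ (n + 1) := by
  have : 0 < β := by linarith
  gcongr
  exact_mod_cast ha n

theorem IsBinary.summable (ha : IsBinary a) : Summable fun n : ℕ => (a n : ℝ) / β ^ (n + 1) := by
  have : 0 < β := by linarith
  exact .of_nonneg_of_le (fun n => by positivity) (ha.digit_div_le hβ)
    (hasSum_one_div_pow_succ hβ).summable

theorem betaVal_nonneg (a : ℕ → ℕ) : 0 ≤ betaVal β a := by
  have : 0 < β := by linarith
  exact tsum_nonneg fun n => by positivity

theorem IsBinary.betaVal_le (ha : IsBinary a) : betaVal β a ≤ 1 / (β - 1) := by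
  rw [← (hasSum_one_div_pow_succ hβ).tsum_eq]
  exact (ha.summable hβ).tsum_le_tsum (ha.digit_div_le hβ) (hasSum_one_div_pow_succ hβ).summable

theorem IsBinary.betaVal_reflect (ha : IsBinary a) :
    betaVal β (reflect a) = 1 / (β - 1) - betaVal β a := by
  rw [← (hasSum_one_div_pow_succ hβ).tsum_eq, betaVal, betaVal,
    ← (hasSum_one_div_pow_succ hβ).summable.tsum_sub (ha.summable hβ)]
  refine tsum_congr fun n => ?_
  rw [reflect, Nat.cast_sub (ha n), Nat.cast_one, sub_div]

theorem IsBinary.betaVal_eq_prefixVal_add (ha : IsBinary a) (n : ℕ) :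
    betaVal β a = prefixVal β n a + betaVal β (BetaExpansion.shift n a) / β ^ n := by
  rw [betaVal, ← (ha.summable hβ).sum_add_tsum_nat_add n, prefixVal, betaVal, ← tsum_div_const]
  congr 1
  refine tsum_congr fun i => ?_
  rw [BetaExpansion.shift, div_div, ← pow_add, Nat.add_right_comm]

theorem IsBinary.betaVal_eq (ha : IsBinary a) :
    betaVal β a = (a 0 + betaVal β (BetaExpansion.shift 1 a)) / β := by
  rw [ha.betaVal_eq_prefixVal_add hβ 1, prefixVal_succ]
  simp [prefixVal, add_div]

theorem IsBinary.betaVal_cons (ha : IsBinary a) {d : ℕ} (hd : d ≤ 1) :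
    betaVal β (BetaExpansion.cons d a) = (d + betaVal β a) / β :=
  (ha.cons hd).betaVal_eq hβ

theorem IsBinary.betaVal_eq_three_digits (ha : IsBinary a) :
    betaVal β a =
      (a 0 * β ^ 2 + a 1 * β + a 2 + betaVal β (BetaExpansion.shift 3 a)) / β ^ 3 := by
  have : 0 < β := by linarith
  rw [ha.betaVal_eq_prefixVal_add hβ 3, prefixVal]
  simp only [Finset.sum_range_succ, Finset.sum_range_zero]
  field_simp
  ring

theorem IsBinary.betaVal_sub_of_agree (ha : IsBinary a) (hb : IsBinary b) {n : ℕ}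
    (h : ∀ i < n, a i = b i) :
    betaVal β a - betaVal β b =
      (betaVal β (BetaExpansion.shift n a) - betaVal β (BetaExpansion.shift n b)) / β ^ n := by
  rw [ha.betaVal_eq_prefixVal_add hβ n, hb.betaVal_eq_prefixVal_add hβ n, prefixVal_congr h]
  ring

theorem IsBinary.betaVal_sub_of_agree_succ (ha : IsBinary a) (hb : IsBinary b) {n : ℕ}
    (h : ∀ i < n, a i = b i) :
    betaVal β a - betaVal β b =
      (a n + betaVal β (BetaExpansion.shift (n + 1) a)
        - (b n + betaVal β (BetaExpansion.shift (n + 1) b))) / β ^ (n + 1) := by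
  rw [ha.betaVal_sub_of_agree hβ hb h, (ha.shift n).betaVal_eq hβ, (hb.shift n).betaVal_eq hβ,
    shift_shift, shift_shift, ← sub_div, div_div, ← pow_succ', add_comm 1 n]
  simp only [BetaExpansion.shift, zero_add]

theorem IsBinary.abs_betaVal_sub_le (ha : IsBinary a) (hb : IsBinary b) {n : ℕ}
    (h : ∀ i < n, a i = b i) :
    |betaVal β a - betaVal β b| ≤ 1 / (β - 1) / β ^ n := by
  have hpow : 0 < β ^ n := pow_pos (by linarith) n
  rw [ha.betaVal_sub_of_agree hβ hb h, abs_div, abs_of_pos hpow]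
  gcongr
  have := betaVal_nonneg hβ (BetaExpansion.shift n a)
  have := betaVal_nonneg hβ (BetaExpansion.shift n b)
  have := (ha.shift n).betaVal_le hβ
  have := (hb.shift n).betaVal_le hβ
  rw [abs_le]
  constructor <;> linarith

theorem IsBinary.betaVal_mem_Icc_prefixVal (ha : IsBinary a) (n : ℕ) :
    betaVal β a ∈ Set.Icc (prefixVal β n a) (prefixVal β n a + 1 / (β - 1) / β ^ n) := by
  have hpow : 0 < β ^ n := pow_pos (by linarith) n
  rw [ha.betaVal_eq_prefixVal_add hβ n]
  refine ⟨le_add_of_nonneg_right (div_nonneg (betaVal_nonneg hβ _) hpow.le), ?_⟩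
  gcongr
  exact (ha.shift n).betaVal_le hβ

end Values

theorem dimH_betaVal_image_preimage_shift_le {β : ℝ} (hβ : 1 < β) (T : Set (ℕ → ℕ)) (k : ℕ) :
    dimH (betaVal β '' {a | IsBinary a ∧ shift k a ∈ T}) ≤ dimH (betaVal β '' T) := by
  induction k with
  | zero => exact dimH_mono (Set.image_mono fun a ha => ha.2)
  | succ k ih =>
    refine le_trans ?_ ih
    set V := betaVal β '' {a | IsBinary a ∧ shift k a ∈ T}
    have subset : betaVal β '' {a | IsBinary a ∧ shift (k + 1) a ∈ T} ⊆
        ⋃ d : ℕ, (fun x => (d + x) / β) '' V := by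
      rintro _ ⟨a, ⟨ha, hk⟩, rfl⟩
      exact Set.mem_iUnion.2
        ⟨a 0, _, ⟨shift 1 a, ⟨ha.shift 1, by rwa [shift_shift]⟩, rfl⟩, (ha.betaVal_eq hβ).symm⟩
    refine (dimH_mono subset).trans ((dimH_iUnion _).trans_le (iSup_le fun d => ?_))
    have smooth : ContDiffOn ℝ 1 (fun x : ℝ => (d + x) / β) Set.univ := by fun_prop
    exact smooth.dimH_image_le convex_univ (Set.subset_univ V)

/-! ### Greedy expansions -/

/-- The remainders of the greedy algorithm for `y` in base `β`: `y - greedyRem β y n / β ^ n` is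
the value of the first `n` greedy digits. -/
noncomputable def greedyRem (β y : ℝ) : ℕ → ℝ
  | 0 => y
  | n + 1 => if 1 ≤ β * greedyRem β y n then β * greedyRem β y n - 1 else β * greedyRem β y n

/-- The digits of the greedy expansion of `y` in base `β`, indexed from `0` like the argument of
`betaVal`. -/
noncomputable def greedyDigit (β y : ℝ) (n : ℕ) : ℕ := if 1 ≤ β * greedyRem β y n then 1 else 0

section Greedy

variable {β y : ℝ}

theorem isBinary_greedyDigit (β y : ℝ) : IsBinary (greedyDigit β y) := fun n => by
  unfold greedyDigit
  split_ifs <;> simp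

theorem greedyRem_succ (β y : ℝ) (n : ℕ) :
    greedyRem β y (n + 1) = β * greedyRem β y n - greedyDigit β y n := by
  rw [greedyRem, greedyDigit]
  split_ifs <;> simp

theorem greedyRem_mem_Icc (hβ : 1 < β) (hβ₂ : β ≤ 2) (hy : y ∈ Set.Icc 0 (1 / (β - 1))) (n : ℕ) :
    greedyRem β y n ∈ Set.Icc 0 (1 / (β - 1)) := by
  have hβ₁ : 0 < β - 1 := by linarith
  induction n with
  | zero => exact hy
  | succ n ih =>
    simp only [Set.mem_Icc, le_div_iff₀ hβ₁] at ih ⊢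
    rw [greedyRem]
    split_ifs with h
    · exact ⟨by linarith, by nlinarith [mul_le_mul_of_nonneg_left ih.2 (by linarith : 0 ≤ β)]⟩
    · exact ⟨mul_nonneg (by linarith) ih.1, by nlinarith⟩

theorem prefixVal_greedyDigit (hβ : β ≠ 0) (n : ℕ) :
    prefixVal β n (greedyDigit β y) = y - greedyRem β y n / β ^ n := by
  induction n with
  | zero => simp [prefixVal, greedyRem]
  | succ n ih =>
    rw [prefixVal, Finset.sum_range_succ, ← prefixVal, ih, greedyRem_succ, pow_succ]
    field_simp
    ring

theorem tendsto_const_div_pow_atTop (hβ : 1 < β) (c : ℝ) :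
    Tendsto (fun n : ℕ => c / β ^ n) atTop (𝓝 0) :=
  tendsto_const_nhds.div_atTop (tendsto_pow_atTop_atTop_of_one_lt hβ)

theorem betaVal_greedyDigit (hβ : 1 < β) (hβ₂ : β ≤ 2) (hy : y ∈ Set.Icc 0 (1 / (β - 1))) :
    betaVal β (greedyDigit β y) = y := by
  have hβ₀ : 0 < β := by linarith
  have remainder : Tendsto (fun n => greedyRem β y n / β ^ n) atTop (𝓝 0) :=
    squeeze_zero (fun n => div_nonneg (greedyRem_mem_Icc hβ hβ₂ hy n).1 (by positivity))
      (fun n => div_le_div_of_nonneg_right (greedyRem_mem_Icc hβ hβ₂ hy n).2 (by positivity))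
      (tendsto_const_div_pow_atTop hβ _)
  have partial_sums : Tendsto (fun n => prefixVal β n (greedyDigit β y)) atTop (𝓝 y) := by
    simpa only [prefixVal_greedyDigit hβ₀.ne', sub_zero] using remainder.const_sub y
  exact tendsto_nhds_unique
    ((isBinary_greedyDigit β y).summable hβ).hasSum.tendsto_sum_nat partial_sums

theorem greedyRem_lt_one (hβ : 0 < β) (hβ₂ : β ≤ 2) (hy : y < 1) (n : ℕ) :
    greedyRem β y n < 1 := by
  induction n with
  | zero => exact hy
  | succ n ih =>
    rw [greedyRem]
    split_ifs with h
    · nlinarith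
    · linarith

theorem greedyDigit_succ_eq_zero (hβ : 0 < β) (hβ₂ : β ^ 2 ≤ β + 1) {n : ℕ}
    (hrem : greedyRem β y n < 1) (hdigit : greedyDigit β y n = 1) :
    greedyDigit β y (n + 1) = 0 := by
  have : β * greedyRem β y (n + 1) < 1 := by
    rw [greedyRem_succ, hdigit, Nat.cast_one]
    nlinarith [mul_lt_mul_of_pos_left hrem (pow_pos hβ 2)]
  rw [greedyDigit, if_neg this.not_ge]

end Greedy

/-! ### Univoque sequences -/

section Univoque

variable {β : ℝ} (hβ : 1 < β)
include hβ

theorem Uset_eq_betaVal_image_UTilde : Uset β = betaVal β '' UTilde β := by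
  ext x
  constructor
  · rintro ⟨-, a, ⟨ha, rfl⟩, huniq⟩
    exact ⟨a, ⟨ha, fun b hb hval => huniq b ⟨hb, hval⟩⟩, rfl⟩
  · rintro ⟨a, ⟨ha, huniq⟩, rfl⟩
    exact ⟨⟨betaVal_nonneg hβ a, IsBinary.betaVal_le hβ ha⟩, a, ⟨ha, rfl⟩,
      fun b hb => huniq b hb.1 hb.2⟩

theorem shift_one_mem_UTilde (ha : a ∈ UTilde β) : shift 1 a ∈ UTilde β := by
  have hbin : IsBinary a := ha.1
  refine ⟨hbin.shift 1, fun b hb hval => ?_⟩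
  have hcons : cons (a 0) b = a := by
    refine ha.2 _ (IsBinary.cons hb (hbin 0)) ?_
    rw [IsBinary.betaVal_cons hβ hb (hbin 0), hval, hbin.betaVal_eq hβ]
  exact congrArg (shift 1) hcons

theorem shift_mem_UTilde (ha : a ∈ UTilde β) (k : ℕ) : shift k a ∈ UTilde β := by
  induction k generalizing a with
  | zero => exact ha
  | succ _ ih => exact ih (shift_one_mem_UTilde hβ ha)

theorem reflect_mem_UTilde (ha : a ∈ UTilde β) : reflect a ∈ UTilde β := by
  refine ⟨isBinary_reflect a, fun b hb hval => ?_⟩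
  have hreflect : reflect b = a := by
    refine ha.2 _ (isBinary_reflect b) ?_
    rw [IsBinary.betaVal_reflect hβ hb, hval, IsBinary.betaVal_reflect hβ ha.1, sub_sub_cancel]
  rw [← hreflect, IsBinary.reflect_reflect hb]

theorem betaVal_shift_one_lt_one (hβ₂ : β ≤ 2) (ha : a ∈ UTilde β) (h₀ : a 0 = 0) :
    betaVal β (shift 1 a) < 1 := by
  have hbin : IsBinary a := ha.1
  by_contra! hle
  -- Otherwise the first digit could be raised to `1`, compensating by a greedy expansion.
  have hmem : betaVal β (shift 1 a) - 1 ∈ Set.Icc 0 (1 / (β - 1)) :=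
    ⟨sub_nonneg.2 hle, by linarith [(hbin.shift 1).betaVal_le hβ]⟩
  set g := greedyDigit β (betaVal β (shift 1 a) - 1)
  have hg : IsBinary g := isBinary_greedyDigit _ _
  have hcons : cons 1 g = a := by
    refine ha.2 _ (hg.cons le_rfl) ?_
    rw [hg.betaVal_cons hβ le_rfl, betaVal_greedyDigit hβ hβ₂ hmem, hbin.betaVal_eq hβ, h₀]
    norm_num
  exact zero_ne_one (h₀.symm.trans (congrFun hcons 0).symm)

theorem mem_UTilde_of_betaVal_shift_lt_one (ha : IsBinary a)
    (hlt : ∀ k, betaVal β (shift k a) < 1) (hlt' : ∀ k, betaVal β (reflect (shift k a)) < 1) :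
    a ∈ UTilde β := by
  refine ⟨ha, fun b (hb : IsBinary b) hval => ?_⟩
  by_contra hne
  set n := PiNat.firstDiff b a
  have hdiff : b n ≠ a n := PiNat.apply_firstDiff_ne hne
  have hbalance := hb.betaVal_sub_of_agree_succ hβ ha (n := n)
    fun i hi => PiNat.apply_eq_of_lt_firstDiff hi
  rw [hval, sub_self, eq_comm, div_eq_zero_iff,
    or_iff_left (pow_ne_zero _ (by linarith))] at hbalance
  have upper := hlt (n + 1)
  have lower := hlt' (n + 1)
  rw [(ha.shift _).betaVal_reflect hβ] at lower
  have nonneg := betaVal_nonneg hβ (shift (n + 1) b)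
  have le := (hb.shift (n + 1)).betaVal_le hβ
  rcases hb.eq_zero_or_eq_one n with hbn | hbn <;> rcases ha.eq_zero_or_eq_one n with han | han
  · exact hdiff (hbn.trans han.symm)
  · rw [hbn, han] at hbalance
    push_cast at hbalance
    linarith
  · rw [hbn, han] at hbalance
    push_cast at hbalance
    linarith
  · exact hdiff (hbn.trans han.symm)

end Univoque

/-! ### Univoque sequences in bases with `β ^ 4 - 2 * β ^ 3 + β - 1 ≤ 0` -/

theorem base_lt_two {β : ℝ} (hpoly : β ^ 4 - 2 * β ^ 3 + β - 1 ≤ 0) : β < 2 := by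
  by_contra! h
  nlinarith [pow_pos (by linarith : 0 < β) 3]

section SmallBase

variable {β : ℝ} (hβ : 1 < β) (hpoly : β ^ 4 - 2 * β ^ 3 + β - 1 ≤ 0)
include hβ hpoly

-- The right-hand side over `β ^ 3` is the value of `1101111…`.
theorem pow_three_le : β ^ 3 ≤ β ^ 2 + β + 1 / (β - 1) := by
  have hβ₁ : 0 < β - 1 := by linarith
  rw [← sub_le_iff_le_add', le_div_iff₀ hβ₁]
  linarith

theorem not_zero_one_one_one (ha : a ∈ UTilde β) :
    ¬ (a 0 = 0 ∧ a 1 = 1 ∧ a 2 = 1 ∧ a 3 = 1) := by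
  rintro ⟨h₀, h₁, h₂, h₃⟩
  have hβ₂ := (base_lt_two hpoly).le
  have hbin : IsBinary a := ha.1
  have tail_lt : betaVal β (shift 1 a) < 1 := betaVal_shift_one_lt_one hβ hβ₂ ha h₀
  have reflect_lt : betaVal β (reflect (shift 4 a)) < 1 :=
    betaVal_shift_one_lt_one hβ hβ₂ (reflect_mem_UTilde hβ (shift_mem_UTilde hβ ha 3))
      (by simp [reflect, shift, h₃])
  rw [(hbin.shift 4).betaVal_reflect hβ] at reflect_lt
  have hcube : 0 < β ^ 3 := pow_pos (by linarith) 3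
  rw [(hbin.shift 1).betaVal_eq_three_digits hβ, shift_shift, div_lt_one hcube] at tail_lt
  simp only [shift, h₁, h₂, h₃] at tail_lt
  push_cast at tail_lt
  linarith [pow_three_le hβ hpoly]

theorem not_triple_of_head_ne (ha : a ∈ UTilde β) (hne : a 0 ≠ a 1) :
    ¬ (a 1 = a 2 ∧ a 2 = a 3) := by
  rintro ⟨h₁₂, h₂₃⟩
  have hbin : IsBinary a := ha.1
  have h₁ := hbin.eq_zero_or_eq_one 1
  rcases hbin.eq_zero_or_eq_one 0 with h₀ | h₀
  · exact not_zero_one_one_one hβ hpoly ha (by omega)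
  · exact not_zero_one_one_one hβ hpoly (reflect_mem_UTilde hβ ha) (by simp only [reflect]; omega)

theorem tripleFree_of_head_ne (ha : a ∈ UTilde β) (hne : a 0 ≠ a 1) : TripleFree a := by
  refine ⟨ha.1, fun n => ?_⟩
  induction n with
  | zero => exact fun h => hne h.1
  | succ n ih =>
    rintro ⟨h, h'⟩
    have tail_not_triple := not_triple_of_head_ne hβ hpoly (shift_mem_UTilde hβ ha n)
    simp only [shift, Nat.add_comm _ n] at tail_not_triple
    exact tail_not_triple (fun h₀ => ih ⟨h₀, h⟩) ⟨h, h'⟩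

theorem constant_or_tripleFree_shift (ha : a ∈ UTilde β) :
    (∃ d, a = fun _ => d) ∨ ∃ k, TripleFree (shift k a) := by
  by_cases h : ∃ k, a k ≠ a (k + 1)
  · obtain ⟨k, hk⟩ := h
    refine .inr ⟨k, tripleFree_of_head_ne hβ hpoly (shift_mem_UTilde hβ ha k) ?_⟩
    simpa only [shift, Nat.zero_add, Nat.add_comm 1 k] using hk
  · push Not at h
    refine .inl ⟨a 0, funext fun n => ?_⟩
    induction n with
    | zero => rfl
    | succ n ih => exact (h n).symm.trans ih

theorem dimH_Uset_le_dimH_tripleFree : dimH (Uset β) ≤ dimH (betaVal β '' {a | TripleFree a}) := by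
  have subset : Uset β ⊆ Set.range (fun d : ℕ => betaVal β fun _ => d) ∪
      ⋃ k, betaVal β '' {a | IsBinary a ∧ shift k a ∈ {a | TripleFree a}} := by
    rw [Uset_eq_betaVal_image_UTilde hβ]
    rintro _ ⟨a, ha, rfl⟩
    rcases constant_or_tripleFree_shift hβ hpoly ha with ⟨d, rfl⟩ | ⟨k, hk⟩
    · exact .inl ⟨d, rfl⟩
    · exact .inr (Set.mem_iUnion.2 ⟨k, a, ⟨ha.1, hk⟩, rfl⟩)
  refine (dimH_mono subset).trans ?_
  rw [dimH_union, dimH_countable (Set.countable_range _), dimH_iUnion]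
  exact max_le zero_le (iSup_le fun k => dimH_betaVal_image_preimage_shift_le hβ _ k)

end SmallBase

/-! ### Counting prefixes of triple-free sequences -/

/-- The values of the prefixes of length `n` of the triple-free sequences with first digit `d`. -/
def tripleFreePrefixVals (β : ℝ) (n d : ℕ) : Set ℝ :=
  prefixVal β n '' {a | TripleFree a ∧ a 0 = d}

-- The first block of equal digits has length one or two.
theorem tripleFreePrefixVals_add_two_subset (β : ℝ) (n d : ℕ) :
    tripleFreePrefixVals β (n + 2) d ⊆
      (fun p => (d + p) / β) '' tripleFreePrefixVals β (n + 1) (1 - d) ∪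
        (fun p => (d + (d + p) / β) / β) '' tripleFreePrefixVals β n (1 - d) := by
  rintro _ ⟨a, ⟨ha, rfl⟩, rfl⟩
  have hnot := ha.not_triple 0
  have h₀ := ha.isBinary 0
  have h₁ := ha.isBinary 1
  have h₂ := ha.isBinary 2
  by_cases h : a 1 = a 0
  · have hhead : shift 2 a 0 = 1 - a 0 := by
      simp only [shift, zero_add] at hnot ⊢
      omega
    refine .inr ⟨_, ⟨shift 2 a, ⟨ha.shift 2, hhead⟩, rfl⟩, ?_⟩
    simp only [prefixVal_succ, shift_shift]
    simp only [shift, zero_add, h]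
  · have hhead : shift 1 a 0 = 1 - a 0 := by
      simp only [shift, zero_add]
      omega
    exact .inl ⟨_, ⟨shift 1 a, ⟨ha.shift 1, hhead⟩, rfl⟩, (prefixVal_succ β (n + 1) a).symm⟩

theorem encard_tripleFreePrefixVals_le (β : ℝ) (n d : ℕ) :
    (tripleFreePrefixVals β n d).encard ≤ Nat.fib (n + 1) := by
  induction n using Nat.twoStepInduction generalizing d with
  | zero =>
    refine (Set.encard_le_encard (t := {0}) ?_).trans (by simp)
    rintro _ ⟨a, -, rfl⟩
    simp [prefixVal]
  | one =>
    refine (Set.encard_le_encard (t := {(d : ℝ) / β}) ?_).trans (by simp)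
    rintro _ ⟨a, ⟨-, rfl⟩, rfl⟩
    simp [prefixVal]
  | more n ih₀ ih₁ =>
    rw [Nat.fib_add_two (n := n + 1), Nat.add_comm (Nat.fib _), Nat.cast_add]
    exact (Set.encard_le_encard (tripleFreePrefixVals_add_two_subset β n d)).trans
      ((Set.encard_union_le _ _).trans (add_le_add ((Set.encard_image_le _ _).trans (ih₁ _))
        ((Set.encard_image_le _ _).trans (ih₀ _))))

theorem encard_prefixVal_image_tripleFree_le (β : ℝ) (n : ℕ) :
    (prefixVal β n '' {a | TripleFree a}).encard ≤ ((2 * Nat.fib (n + 1) : ℕ) : ℕ∞) := by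
  have subset : prefixVal β n '' {a | TripleFree a} ⊆
      tripleFreePrefixVals β n 0 ∪ tripleFreePrefixVals β n 1 := by
    rintro _ ⟨a, ha, rfl⟩
    exact (ha.isBinary.eq_zero_or_eq_one 0).imp (fun h => ⟨a, ⟨ha, h⟩, rfl⟩)
      fun h => ⟨a, ⟨ha, h⟩, rfl⟩
  rw [two_mul, Nat.cast_add]
  exact (Set.encard_le_encard subset).trans ((Set.encard_union_le _ _).trans
    (add_le_add (encard_tripleFreePrefixVals_le β n 0) (encard_tripleFreePrefixVals_le β n 1)))

theorem fib_succ_le_goldenRatio_pow (n : ℕ) : (Nat.fib (n + 1) : ℝ) ≤ φ ^ n := by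
  refine le_of_mul_le_mul_left ?_ Real.goldenRatio_pos
  rw [← pow_succ', ← Real.goldenRatio_mul_fib_succ_add_fib n]
  exact le_add_of_nonneg_right (Nat.cast_nonneg _)

theorem ncard_prefixVal_image_tripleFree_le (β : ℝ) (n : ℕ) :
    ((prefixVal β n '' {a | TripleFree a}).ncard : ℝ) ≤ 2 * φ ^ n := by
  have ncard_le : (prefixVal β n '' {a | TripleFree a}).ncard ≤ 2 * Nat.fib (n + 1) :=
    ENat.toNat_le_of_le_natCast (encard_prefixVal_image_tripleFree_le β n)
  calc ((prefixVal β n '' {a | TripleFree a}).ncard : ℝ) ≤ 2 * Nat.fib (n + 1) := by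
        exact_mod_cast ncard_le
    _ ≤ 2 * φ ^ n := by
        gcongr
        exact fib_succ_le_goldenRatio_pow n

theorem logb_goldenRatio_pos {β : ℝ} (hβ : 1 < β) : 0 < Real.logb β φ :=
  Real.logb_pos hβ Real.one_lt_goldenRatio

theorem dimH_tripleFree_le {β : ℝ} (hβ : 1 < β) :
    dimH (betaVal β '' {a | TripleFree a}) ≤ ENNReal.ofReal (Real.logb β φ) := by
  have hβ₀ : 0 < β := by linarith
  have hβ₁ : 0 < 1 / (β - 1) := one_div_pos.2 (by linarith)
  have hs := logb_goldenRatio_pos hβ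
  have hfin (n : ℕ) : (prefixVal β n '' {a | TripleFree a}).Finite :=
    Set.finite_of_encard_le_coe (encard_prefixVal_image_tripleFree_le β n)
  refine dimH_le_of_cover_Icc (r := fun n => 1 / (β - 1) / β ^ n)
    (C := 2 * (1 / (β - 1)) ^ Real.logb β φ) hs.le (fun n => by positivity)
    (tendsto_const_div_pow_atTop hβ _) hfin (fun n => ?_) fun n => ?_
  · have hpow : (β ^ n) ^ Real.logb β φ = φ ^ n := by
      rw [← Real.rpow_pow_comm hβ₀.le, Real.rpow_logb hβ₀ hβ.ne' Real.goldenRatio_pos]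
    have hφ : 0 < φ ^ n := pow_pos Real.goldenRatio_pos n
    rw [Real.div_rpow hβ₁.le (by positivity), hpow, mul_div_assoc', div_le_iff₀ hφ]
    calc _ ≤ 2 * φ ^ n * (1 / (β - 1)) ^ Real.logb β φ := by
          gcongr
          exact ncard_prefixVal_image_tripleFree_le β n
      _ = 2 * (1 / (β - 1)) ^ Real.logb β φ * φ ^ n := by ring
  · rintro _ ⟨a, ha, rfl⟩
    exact Set.mem_biUnion (Set.mem_image_of_mem _ ha)
      (ha.isBinary.betaVal_mem_Icc_prefixVal hβ n)

theorem dimH_Uset_le {β : ℝ} (hβ : 1 < β) (hpoly : β ^ 4 - 2 * β ^ 3 + β - 1 ≤ 0) :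
    dimH (Uset β) ≤ ENNReal.ofReal (Real.logb β φ) :=
  (dimH_Uset_le_dimH_tripleFree hβ hpoly).trans (dimH_tripleFree_le hβ)

/-! ### Triple-free sequences in bases with `β ^ 2 + β + 1 < β ^ 3` -/

/-- The value `(β ^ 2 + β) / (β ^ 3 - 1)` of the periodic sequence `110110…`, the largest one among
triple-free sequences. -/
noncomputable def tripleFreeSup (β : ℝ) : ℝ := (β ^ 2 + β) / (β ^ 3 - 1)

theorem TripleFree.first_three_digits_le {β : ℝ} (hβ : 1 ≤ β) (ha : TripleFree a) :
    (a 0 : ℝ) * β ^ 2 + a 1 * β + a 2 ≤ β ^ 2 + β := by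
  have hnot := ha.not_triple 0
  rcases ha.isBinary.eq_zero_or_eq_one 0 with h₀ | h₀ <;>
    rcases ha.isBinary.eq_zero_or_eq_one 1 with h₁ | h₁ <;>
    rcases ha.isBinary.eq_zero_or_eq_one 2 with h₂ | h₂ <;>
    simp [h₀, h₁, h₂] at hnot ⊢ <;> nlinarith

theorem TripleFree.betaVal_le {β : ℝ} (hβ : 1 < β) (ha : TripleFree a) :
    betaVal β a ≤ tripleFreeSup β := by
  have hcube : 1 < β ^ 3 := one_lt_pow₀ hβ (by norm_num)
  set V := betaVal β '' {a | TripleFree a}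
  have bdd : BddAbove V := ⟨1 / (β - 1), by
    rintro _ ⟨b, hb, rfl⟩
    exact hb.isBinary.betaVal_le hβ⟩
  have sup_le : sSup V ≤ (β ^ 2 + β + sSup V) / β ^ 3 := by
    refine csSup_le ⟨_, a, ha, rfl⟩ ?_
    rintro _ ⟨b, hb, rfl⟩
    rw [hb.isBinary.betaVal_eq_three_digits hβ]
    exact div_le_div_of_nonneg_right (add_le_add (hb.first_three_digits_le hβ.le)
      (le_csSup bdd ⟨_, hb.shift 3, rfl⟩)) (by linarith)
  refine (le_csSup bdd ⟨a, ha, rfl⟩).trans ?_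
  rw [le_div_iff₀ (by linarith)] at sup_le
  rw [tripleFreeSup, le_div_iff₀ (by linarith)]
  linarith

section LargeBase

variable {β : ℝ} (hβ : β ^ 2 + β + 1 < β ^ 3)
include hβ

theorem one_lt_base : 1 < β := by
  have hpos : 0 < β := by
    by_contra! h
    nlinarith [Odd.pow_nonpos (n := 3) (by decide) h, sq_nonneg (β + 1)]
  by_contra! h
  nlinarith [pow_pos hpos 2]

theorem tripleFreeSup_lt_one : tripleFreeSup β < 1 := by
  have : 1 < β ^ 3 := one_lt_pow₀ (one_lt_base hβ) (by norm_num)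
  rw [tripleFreeSup, div_lt_one (by linarith)]
  linarith

theorem TripleFree.mem_UTilde (ha : TripleFree a) : a ∈ UTilde β := by
  have betaVal_lt_one {b : ℕ → ℕ} (hb : TripleFree b) : betaVal β b < 1 :=
    (hb.betaVal_le (one_lt_base hβ)).trans_lt (tripleFreeSup_lt_one hβ)
  exact mem_UTilde_of_betaVal_shift_lt_one (one_lt_base hβ) ha.isBinary
    (fun k => betaVal_lt_one (ha.shift k)) fun k => betaVal_lt_one (ha.shift k).reflect

theorem TripleFree.le_abs_betaVal_sub (ha : TripleFree a) (hb : TripleFree b) {n : ℕ}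
    (h : ∀ i < n, a i = b i) (hn : a n ≠ b n) :
    (1 - tripleFreeSup β) / β ^ (n + 1) ≤ |betaVal β a - betaVal β b| := by
  have hβ₁ := one_lt_base hβ
  wlog hlt : b n < a n generalizing a b
  · rw [abs_sub_comm]
    exact this hb ha (fun i hi => (h i hi).symm) hn.symm (hn.lt_or_gt.resolve_right hlt)
  have han := ha.isBinary n
  obtain ⟨ha₁, hb₀⟩ : a n = 1 ∧ b n = 0 := by omega
  refine le_trans ?_ (le_abs_self _)
  rw [ha.isBinary.betaVal_sub_of_agree_succ hβ₁ hb.isBinary h, ha₁, hb₀, Nat.cast_one,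
    Nat.cast_zero, zero_add]
  have := betaVal_nonneg hβ₁ (BetaExpansion.shift (n + 1) a)
  have := (hb.shift (n + 1)).betaVal_le hβ₁
  gcongr
  linarith

end LargeBase

/-! ### Recoding by repetitions of digits -/

/-- The sequence marking by `1` the positions at which the digit of `a` is repeated by its
successor. -/
def repetitions (a : ℕ → ℕ) : ℕ → ℕ := fun n => if a n = a (n + 1) then 1 else 0

/-- The inverse of `repetitions` on binary sequences starting with `0`. -/
def ofRepetitions (b : ℕ → ℕ) : ℕ → ℕ
  | 0 => 0
  | n + 1 => if b n = 1 then ofRepetitions b n else 1 - ofRepetitions b n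

theorem isBinary_repetitions (a : ℕ → ℕ) : IsBinary (repetitions a) := fun n => by
  unfold repetitions
  split_ifs <;> simp

theorem isBinary_ofRepetitions (b : ℕ → ℕ) : IsBinary (ofRepetitions b) := fun n => by
  induction n with
  | zero => exact zero_le_one
  | succ n ih =>
    rw [ofRepetitions]
    split_ifs <;> omega

theorem ofRepetitions_eq_succ_iff (b : ℕ → ℕ) (n : ℕ) :
    ofRepetitions b n = ofRepetitions b (n + 1) ↔ b n = 1 := by
  have := isBinary_ofRepetitions b n
  rw [ofRepetitions]
  split_ifs <;> omega

theorem IsBinary.repetitions_ofRepetitions (hb : IsBinary b) :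
    repetitions (ofRepetitions b) = b := by
  funext n
  have := hb n
  simp only [repetitions, ofRepetitions_eq_succ_iff]
  split_ifs <;> omega

theorem tripleFree_ofRepetitions (hb : ∀ n, b n = 1 → b (n + 1) = 0) :
    TripleFree (ofRepetitions b) where
  isBinary := isBinary_ofRepetitions b
  not_triple n := by
    rw [ofRepetitions_eq_succ_iff, ofRepetitions_eq_succ_iff b (n + 1)]
    rintro ⟨h, h'⟩
    exact zero_ne_one ((hb n h).symm.trans h')

theorem Ico_subset_betaVal_goldenRatio_repetitions :
    Set.Ico 0 1 ⊆ (fun a => betaVal φ (repetitions a)) '' {a | TripleFree a ∧ a 0 = 0} := by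
  intro y hy
  have hφ := Real.goldenRatio_pos
  have hφ₁ := Real.one_lt_goldenRatio
  have hφ₂ := Real.goldenRatio_lt_two
  have hy' : y ∈ Set.Icc 0 (1 / (φ - 1)) :=
    ⟨hy.1, hy.2.le.trans ((one_le_div (by linarith)).2 (by linarith))⟩
  refine ⟨ofRepetitions (greedyDigit φ y), ⟨tripleFree_ofRepetitions fun n => ?_, rfl⟩, ?_⟩
  · exact greedyDigit_succ_eq_zero hφ Real.goldenRatio_sq.le (greedyRem_lt_one hφ hφ₂.le hy.2 n)
  · simp only [(isBinary_greedyDigit φ y).repetitions_ofRepetitions]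
    exact betaVal_greedyDigit hφ₁ hφ₂.le hy'

section Holder

variable {β : ℝ} (hβ : β ^ 2 + β + 1 < β ^ 3)
include hβ

theorem TripleFree.abs_betaVal_repetitions_sub_le {s : ℝ} (hs : 0 < s) (ha : TripleFree a)
    (hb : TripleFree b) (h₀ : a 0 = b 0) :
    |betaVal (β ^ s) (repetitions a) - betaVal (β ^ s) (repetitions b)| ≤
      1 / (β ^ s - 1) * (β ^ s) ^ 2 / (1 - tripleFreeSup β) ^ s *
        |betaVal β a - betaVal β b| ^ s := by
  have hβ₁ := one_lt_base hβ
  have hβ₀ : 0 < β := by linarith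
  have hgap : 0 < 1 - tripleFreeSup β := sub_pos.2 (tripleFreeSup_lt_one hβ)
  have hγ : 1 < β ^ s := Real.one_lt_rpow hβ₁ hs
  have : 0 < 1 / (β ^ s - 1) := one_div_pos.2 (by linarith)
  rcases eq_or_ne a b with rfl | hne
  · simp [Real.zero_rpow hs.ne']
  obtain ⟨n, hn⟩ : ∃ n, PiNat.firstDiff a b = n + 1 :=
    Nat.exists_eq_succ_of_ne_zero fun h => PiNat.apply_firstDiff_ne hne (h ▸ h₀)
  have agree (i : ℕ) (hi : i < n + 1) : a i = b i := PiNat.apply_eq_of_lt_firstDiff (hn ▸ hi)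
  have differ : a (n + 1) ≠ b (n + 1) := hn ▸ PiNat.apply_firstDiff_ne hne
  have separated := Real.rpow_le_rpow (by positivity)
    (ha.le_abs_betaVal_sub hβ hb agree differ) hs.le
  rw [Real.div_rpow hgap.le (by positivity), ← Real.rpow_pow_comm hβ₀.le] at separated
  have agree_repetitions (i : ℕ) (hi : i < n) : repetitions a i = repetitions b i := by
    simp only [repetitions, agree i (by omega), agree (i + 1) (by omega)]
  calc _ ≤ 1 / (β ^ s - 1) / (β ^ s) ^ n :=
        (isBinary_repetitions a).abs_betaVal_sub_le hγ (isBinary_repetitions b) agree_repetitions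
    _ = 1 / (β ^ s - 1) * (β ^ s) ^ 2 / (1 - tripleFreeSup β) ^ s *
          ((1 - tripleFreeSup β) ^ s / (β ^ s) ^ (n + 1 + 1)) := by
        have hgap_pow : (1 - tripleFreeSup β) ^ s ≠ 0 := (Real.rpow_pos_of_pos hgap s).ne'
        generalize 1 / (β ^ s - 1) = c
        field_simp
        ring
    _ ≤ _ := by gcongr

theorem dimH_betaVal_repetitions_image_le {s : ℝ} (hs : 0 < s) :
    dimH ((fun a => betaVal (β ^ s) (repetitions a)) '' {a | TripleFree a ∧ a 0 = 0}) ≤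
      dimH (betaVal β '' {a | TripleFree a ∧ a 0 = 0}) / ENNReal.ofReal s := by
  set C := 1 / (β ^ s - 1) * (β ^ s) ^ 2 / (1 - tripleFreeSup β) ^ s
  have hC : 0 ≤ C := by
    have : 1 < β ^ s := Real.one_lt_rpow (one_lt_base hβ) hs
    have : 0 < 1 / (β ^ s - 1) := one_div_pos.2 (by linarith)
    have : 0 < 1 - tripleFreeSup β := sub_pos.2 (tripleFreeSup_lt_one hβ)
    positivity
  refine dimH_image_le_div_of_edist_le (C := C.toNNReal) (Real.toNNReal_pos.2 hs)
    fun a ha b hb => ?_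
  have holder := ha.1.abs_betaVal_repetitions_sub_le hβ hs hb.1 (ha.2.trans hb.2.symm)
  rw [Real.coe_toNNReal s hs.le, edist_dist, edist_dist, Real.dist_eq, Real.dist_eq,
    ENNReal.ofReal_rpow_of_nonneg (abs_nonneg _) hs.le, ← ENNReal.ofReal, ← ENNReal.ofReal_mul hC]
  exact ENNReal.ofReal_le_ofReal holder

theorem le_dimH_Uset : ENNReal.ofReal (Real.logb β φ) ≤ dimH (Uset β) := by
  have hβ₁ := one_lt_base hβ
  have hs := logb_goldenRatio_pos hβ₁
  have subset : betaVal β '' {a | TripleFree a ∧ a 0 = 0} ⊆ Uset β := by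
    rw [Uset_eq_betaVal_image_UTilde hβ₁]
    exact Set.image_mono fun a ha => ha.1.mem_UTilde hβ
  have holder := dimH_betaVal_repetitions_image_le hβ hs
  rw [Real.rpow_logb (by linarith) hβ₁.ne' Real.goldenRatio_pos] at holder
  have dimH_Ico : dimH (Set.Ico (0 : ℝ) 1) = 1 := by
    rw [Real.dimH_of_nonempty_interior (by simp), Module.finrank_self, Nat.cast_one]
  have one_le := (dimH_Ico.symm.trans_le
    (dimH_mono Ico_subset_betaVal_goldenRatio_repetitions)).trans holder
  rw [ENNReal.le_div_iff_mul_le (by simp [hs]) (by simp), one_mul] at one_le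
  exact one_le.trans (dimH_mono subset)

end Holder

-- With `u = β ^ 2 - β` the equation reads `u ^ 2 = u + 1`.
theorem sq_add_self_add_one_lt_pow_three {β : ℝ} (hβ : 1 < β)
    (hroot : β ^ 4 - 2 * β ^ 3 + β - 1 = 0) : β ^ 2 + β + 1 < β ^ 3 := by
  have hu : 0 < β ^ 2 - β := by nlinarith
  have gap_mul : (β ^ 3 - (β ^ 2 + β + 1)) * (β ^ 2 - β) = β * (2 - β) := by
    linear_combination β * hroot
  have hpos : 0 < β * (2 - β) := mul_pos (by linarith) (sub_pos.2 (base_lt_two hroot.le))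
  exact sub_pos.1 (pos_of_mul_pos_left (gap_mul ▸ hpos) hu.le)

end BetaExpansion

theorem statement7_general (β : ℝ) (hlower : β ^ 2 + β + 1 < β ^ 3)
    (hupper : β ^ 4 - 2 * β ^ 3 + β - 1 ≤ 0) :
    dimH (Uset β) = ENNReal.ofReal (Real.log ((1 + Real.sqrt 5) / 2) / Real.log β) :=
  le_antisymm (BetaExpansion.dimH_Uset_le (BetaExpansion.one_lt_base hlower) hupper)
    (BetaExpansion.le_dimH_Uset hlower)

/-- if `β ∈ (1,2)` is the largest positive root of `x⁴ - 2x³ + x - 1 = 0`,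
then `dim_H (U_β) = log G / log β` where `G` is the golden mean. -/
theorem statement7 (β : ℝ) (hβ : β ∈ Set.Ioo (1 : ℝ) 2)
    (hroot : β ^ 4 - 2 * β ^ 3 + β - 1 = 0)
    (hmax : ∀ y : ℝ, 0 < y → y ^ 4 - 2 * y ^ 3 + y - 1 = 0 → y ≤ β) :
    dimH (Uset β) =
      ENNReal.ofReal (Real.log ((1 + Real.sqrt 5) / 2) / Real.log β) := by
  exact statement7_general β (BetaExpansion.sq_add_self_add_one_lt_pow_three hβ.1 hroot) hroot.le
end

section
/- Let k ≥ 1 be an integer and let x ∈ [0, λ] ∩ K. Then x has exactly k distinct codings if and only if x + 1 − λ ∈ K and x + 1 − λ has exactly k distinct codings. Equivalently, for y ∈ [1−λ, 1] ∩ K, y has exactly k distinct codings if and only if y − (1 − λ) has exactly k distinct codings. -/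
open Filter Topology

/-- `codingApprox f i n = f (i 0) (f (i 1) (⋯ (f (i (n-1)) 0)))`, i.e. the `n`-th
approximation `f_{i_1} ∘ ⋯ ∘ f_{i_n} (0)` of the point coded by `i`. -/
noncomputable def codingApprox (f : Fin 4 → ℝ → ℝ) : (ℕ → Fin 4) → ℕ → ℝ
  | _, 0 => 0
  | i, n + 1 => f (i 0) (codingApprox f (fun k => i (k + 1)) n)

/-- The set of codings of `x` for the IFS `f`. -/
def codings (f : Fin 4 → ℝ → ℝ) (x : ℝ) : Set (ℕ → Fin 4) :=
  {i | Tendsto (codingApprox f i) atTop (𝓝 x)}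

/-!
The four maps share the contraction ratio `λ` and send `[0, 1]` into itself. The bound on `λ` says
exactly that the first cell `[0, λ]` and the last cell `[1 - λ, 1]` are disjoint from all other
cells; only the second and third cells may meet. A coding of a point `f a z` in an isolated cell
has to start with `a`, and what follows is an arbitrary coding of `z`. So both `x = f 0 z` and
`x + 1 - λ = f 3 z` have as many codings as `z`.
-/

section Prepend

variable {f : Fin 4 → ℝ → ℝ} {C : Set ℝ} {a : Fin 4} {i : ℕ → Fin 4} {x z : ℝ}

/-- The digit sequence `a, i 0, i 1, …`, which turns a coding of `z` into one of `f a z`. -/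
def prependDigit (a : Fin 4) (i : ℕ → Fin 4) : ℕ → Fin 4
  | 0 => a
  | n + 1 => i n

theorem prependDigit_injective (a : Fin 4) : Function.Injective (prependDigit a) :=
  fun _ _ h => funext fun n => congrFun h (n + 1)

theorem prependDigit_head_tail (i : ℕ → Fin 4) :
    prependDigit (i 0) (fun n => i (n + 1)) = i := by
  funext n
  cases n <;> rfl

theorem mem_codings_iff_tendsto_tail :
    i ∈ codings f x ↔
      Tendsto (fun n => f (i 0) (codingApprox f (fun k => i (k + 1)) n)) atTop (𝓝 x) :=
  (tendsto_add_atTop_iff_nat 1).symm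

theorem prependDigit_mem_codings_iff (ha : IsInducing (f a)) :
    prependDigit a i ∈ codings f (f a z) ↔ i ∈ codings f z :=
  mem_codings_iff_tendsto_tail.trans ha.tendsto_nhds_iff.symm

theorem codingApprox_mem (h0 : 0 ∈ C) (hmaps : ∀ a, Set.MapsTo (f a) C C)
    (i : ℕ → Fin 4) (n : ℕ) : codingApprox f i n ∈ C := by
  induction n generalizing i with
  | zero => exact h0
  | succ n ih => exact hmaps _ (ih _)

theorem mem_image_head_of_mem_codings (hC : IsCompact C) (h0 : 0 ∈ C)
    (hmaps : ∀ a, Set.MapsTo (f a) C C) (hcont : ∀ a, Continuous (f a)) (hi : i ∈ codings f x) :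
    x ∈ f (i 0) '' C :=
  (hC.image (hcont _)).isClosed.mem_of_tendsto (mem_codings_iff_tendsto_tail.1 hi)
    (.of_forall fun n => Set.mem_image_of_mem _ (codingApprox_mem h0 hmaps _ n))

theorem codings_apply_eq_image_prependDigit (hC : IsCompact C) (h0 : 0 ∈ C)
    (hmaps : ∀ a, Set.MapsTo (f a) C C) (hcont : ∀ a, Continuous (f a)) (ha : IsInducing (f a))
    (hsep : ∀ b, f a z ∈ f b '' C → b = a) :
    codings f (f a z) = prependDigit a '' codings f z := by
  ext i
  constructor
  · intro hi
    have head_eq : i 0 = a := hsep _ (mem_image_head_of_mem_codings hC h0 hmaps hcont hi)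
    have eq_prepend : prependDigit a (fun n => i (n + 1)) = i :=
      head_eq ▸ prependDigit_head_tail i
    exact ⟨_, (prependDigit_mem_codings_iff ha).1 (eq_prepend.symm ▸ hi), eq_prepend⟩
  · rintro ⟨j, hj, rfl⟩
    exact (prependDigit_mem_codings_iff ha).2 hj

theorem encard_codings_apply (hC : IsCompact C) (h0 : 0 ∈ C)
    (hmaps : ∀ a, Set.MapsTo (f a) C C) (hcont : ∀ a, Continuous (f a)) (ha : IsInducing (f a))
    (hsep : ∀ b, f a z ∈ f b '' C → b = a) :
    (codings f (f a z)).encard = (codings f z).encard := by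
  rw [codings_apply_eq_image_prependDigit hC h0 hmaps hcont ha hsep,
    (prependDigit_injective a).encard_image]

end Prepend

theorem nonneg_of_mem_of_subset_iUnion_affine {ι : Type*} {lam : ℝ} {d : ι → ℝ} {K : Set ℝ}
    (hlam0 : 0 ≤ lam) (hlam1 : lam < 1) (hd : ∀ a, 0 ≤ d a) (hKcpt : IsCompact K)
    (hK : K ⊆ ⋃ a, (fun x => lam * x + d a) '' K) {x : ℝ} (hx : x ∈ K) : 0 ≤ x := by
  obtain ⟨m, hm, hmin⟩ := hKcpt.exists_isLeast ⟨x, hx⟩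
  obtain ⟨a, z, hz, hzm : lam * z + d a = m⟩ := Set.mem_iUnion.1 (hK hm)
  have mul_le : lam * m ≤ m := by
    linarith [mul_le_mul_of_nonneg_left (hmin hz) hlam0, hd a]
  have m_nonneg : 0 ≤ m := by nlinarith
  exact m_nonneg.trans (hmin hx)

section OverlapIFS

/-- The translation parts of the four maps, i.e. the left endpoints of their cells. -/
def overlapShift (lam : ℝ) : Fin 4 → ℝ :=
  ![0, 2 * lam, 3 * lam - lam ^ 2, 1 - lam]

/-- The system `F` of the theorem, indexed from `0` and put in the uniform shape
`x ↦ λ x + shift`. -/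
def overlapIFS (lam : ℝ) (a : Fin 4) (x : ℝ) : ℝ :=
  lam * x + overlapShift lam a

theorem overlapIFS_eq (lam : ℝ) :
    overlapIFS lam = ![fun x => lam * x, fun x => lam * x + 2 * lam,
      fun x => lam * x + 3 * lam - lam ^ 2, fun x => lam * x + 1 - lam] := by
  funext a x
  match a with
  | 0 => exact add_zero _
  | 1 => rfl
  | 2 | 3 => exact (add_sub_assoc _ _ _).symm

theorem overlapIFS_zero (lam x : ℝ) : overlapIFS lam 0 x = lam * x :=
  add_zero _

theorem overlapIFS_three (lam x : ℝ) : overlapIFS lam 3 x = lam * x + 1 - lam :=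
  (add_sub_assoc _ _ _).symm

theorem five_mul_lt_one_add_sq {lam : ℝ} (h : lam < (5 - Real.sqrt 21) / 2) :
    5 * lam < 1 + lam ^ 2 := by
  have lt_sq : 21 < (5 - 2 * lam) ^ 2 := Real.lt_sq_of_sqrt_lt (by linarith)
  linarith

theorem lt_one_of_lt_five_sub_sqrt_div_two {lam : ℝ} (h : lam < (5 - Real.sqrt 21) / 2) :
    lam < 1 := by
  have three_lt : 3 < Real.sqrt 21 := Real.lt_sqrt_of_sq_lt (by norm_num)
  linarith

variable {lam : ℝ} {a : Fin 4} {x z : ℝ} {K : Set ℝ}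

theorem continuous_overlapIFS (lam : ℝ) (a : Fin 4) : Continuous (overlapIFS lam a) := by
  unfold overlapIFS
  fun_prop

theorem isInducing_overlapIFS (hlam : lam ≠ 0) (a : Fin 4) : IsInducing (overlapIFS lam a) :=
  ((Homeomorph.mulLeft₀ lam hlam).trans (Homeomorph.addRight (overlapShift lam a))).isInducing

theorem image_overlapIFS_Icc (hlam : 0 < lam) (a : Fin 4) :
    overlapIFS lam a '' Set.Icc 0 1 = Set.Icc (overlapShift lam a) (overlapShift lam a + lam) :=
  (Set.image_affine_Icc' hlam (overlapShift lam a) 0 1).trans (by simp [add_comm])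

theorem overlapShift_nonneg (hlam0 : 0 ≤ lam) (hlam1 : lam ≤ 1) (a : Fin 4) :
    0 ≤ overlapShift lam a :=
  match a with
  | 0 => le_rfl
  | 1 => show 0 ≤ 2 * lam by linarith
  | 2 => show 0 ≤ 3 * lam - lam ^ 2 by nlinarith
  | 3 => show 0 ≤ 1 - lam by linarith

theorem lt_overlapShift (hlam0 : 0 < lam) (hlam1 : lam < 1) (hlam5 : 5 * lam < 1 + lam ^ 2)
    (ha : a ≠ 0) : lam < overlapShift lam a :=
  match a, ha with
  | 1, _ => show lam < 2 * lam by linarith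
  | 2, _ => show lam < 3 * lam - lam ^ 2 by nlinarith
  | 3, _ => show lam < 1 - lam by nlinarith

theorem overlapShift_add_lt (hlam0 : 0 < lam) (hlam1 : lam < 1) (hlam5 : 5 * lam < 1 + lam ^ 2)
    (ha : a ≠ 3) : overlapShift lam a + lam < 1 - lam :=
  match a, ha with
  | 0, _ => show 0 + lam < 1 - lam by nlinarith
  | 1, _ => show 2 * lam + lam < 1 - lam by nlinarith
  | 2, _ => show 3 * lam - lam ^ 2 + lam < 1 - lam by linarith
  | 3, h => absurd rfl h

theorem overlapShift_le (hlam0 : 0 < lam) (hlam1 : lam < 1) (hlam5 : 5 * lam < 1 + lam ^ 2)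
    (a : Fin 4) : overlapShift lam a ≤ 1 - lam := by
  obtain rfl | ha := eq_or_ne a 3
  · exact le_rfl
  · linarith [overlapShift_add_lt hlam0 hlam1 hlam5 ha]

theorem mapsTo_overlapIFS_Icc (hlam0 : 0 < lam) (hlam1 : lam < 1) (hlam5 : 5 * lam < 1 + lam ^ 2)
    (a : Fin 4) :
    Set.MapsTo (overlapIFS lam a) (Set.Icc 0 1) (Set.Icc 0 1) := by
  rw [Set.mapsTo_iff_image_subset, image_overlapIFS_Icc hlam0]
  exact Set.Icc_subset_Icc (overlapShift_nonneg hlam0.le hlam1.le a)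
    (by linarith [overlapShift_le hlam0 hlam1 hlam5 a])

theorem encard_codings_overlapIFS_apply
    (hlam0 : 0 < lam) (hlam1 : lam < 1) (hlam5 : 5 * lam < 1 + lam ^ 2)
    (hsep : ∀ b,
      overlapIFS lam a z ∈ Set.Icc (overlapShift lam b) (overlapShift lam b + lam) → b = a) :
    (codings (overlapIFS lam) (overlapIFS lam a z)).encard
      = (codings (overlapIFS lam) z).encard :=
  encard_codings_apply isCompact_Icc (Set.left_mem_Icc.2 zero_le_one)
    (mapsTo_overlapIFS_Icc hlam0 hlam1 hlam5) (continuous_overlapIFS lam)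
    (isInducing_overlapIFS hlam0.ne' a)
    fun b hb => hsep b (image_overlapIFS_Icc hlam0 b ▸ hb)

theorem encard_codings_add_one_sub
    (hlam0 : 0 < lam) (hlam1 : lam < 1) (hlam5 : 5 * lam < 1 + lam ^ 2) (hx : x ∈ Set.Icc 0 lam) :
    (codings (overlapIFS lam) (x + 1 - lam)).encard = (codings (overlapIFS lam) x).encard := by
  have mul_div : lam * (x / lam) = x := mul_div_cancel₀ x hlam0.ne'
  have first_cell : overlapIFS lam 0 (x / lam) = x := by
    rw [overlapIFS_zero, mul_div]
  have last_cell : overlapIFS lam 3 (x / lam) = x + 1 - lam := by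
    rw [overlapIFS_three, mul_div]
  have encard_first := encard_codings_overlapIFS_apply (a := 0) (z := x / lam) hlam0 hlam1 hlam5
    fun b hb => by
      by_contra hne
      linarith [lt_overlapShift hlam0 hlam1 hlam5 hne, first_cell ▸ hb.1, hx.2]
  have encard_last := encard_codings_overlapIFS_apply (a := 3) (z := x / lam) hlam0 hlam1 hlam5
    fun b hb => by
      by_contra hne
      linarith [overlapShift_add_lt hlam0 hlam1 hlam5 hne, last_cell ▸ hb.2, hx.1]
  rw [← last_cell, encard_last, ← encard_first, first_cell]

theorem add_one_sub_mem_of_le (hlam0 : 0 < lam) (hlam1 : lam < 1) (hlam5 : 5 * lam < 1 + lam ^ 2)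
    (hKcpt : IsCompact K) (hK : K = ⋃ a, overlapIFS lam a '' K)
    (hxK : x ∈ K) (hx : x ≤ lam) : x + 1 - lam ∈ K := by
  obtain ⟨a, z, hz, hzx⟩ := Set.mem_iUnion.1 (hK ▸ hxK)
  have z_nonneg : 0 ≤ z := nonneg_of_mem_of_subset_iUnion_affine hlam0.le hlam1
    (overlapShift_nonneg hlam0.le hlam1.le) hKcpt hK.subset hz
  obtain rfl : a = 0 := by
    by_contra hne
    have shift_le : overlapShift lam a ≤ x :=
      hzx ▸ le_add_of_nonneg_left (mul_nonneg hlam0.le z_nonneg)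
    linarith [lt_overlapShift hlam0 hlam1 hlam5 hne]
  have last_cell : overlapIFS lam 3 z = x + 1 - lam := by
    rw [overlapIFS_three, ← overlapIFS_zero, hzx]
  rw [hK, ← last_cell]
  exact Set.mem_iUnion_of_mem 3 (Set.mem_image_of_mem _ hz)

end OverlapIFS

theorem union_image_eq_iUnion_image {α β : Type*} (f : Fin 4 → α → β) (K : Set α) :
    f 0 '' K ∪ f 1 '' K ∪ f 2 '' K ∪ f 3 '' K = ⋃ a, f a '' K := by
  ext x
  simp [Fin.exists_fin_succ, or_assoc]

/-- for `k ≥ 1` and `x ∈ [0, λ] ∩ K`, `x` has exactly `k` codings iff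
`x + 1 - λ ∈ K` and `x + 1 - λ` has exactly `k` codings; equivalently, for
`y ∈ [1 - λ, 1] ∩ K`, `y` has exactly `k` codings iff `y - (1 - λ)` does. -/
theorem statement8
    (lam : ℝ) (hlam : 0 < lam ∧ lam < (5 - Real.sqrt 21) / 2)
    (f : Fin 4 → ℝ → ℝ)
    (hf : f = ![fun x => lam * x, fun x => lam * x + 2 * lam,
      fun x => lam * x + 3 * lam - lam ^ 2, fun x => lam * x + 1 - lam])
    (K : Set ℝ) (hKne : K.Nonempty) (hKcpt : IsCompact K)
    (hK : K = f 0 '' K ∪ f 1 '' K ∪ f 2 '' K ∪ f 3 '' K)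
    (U : ℕ → Set ℝ)
    (hU : ∀ k : ℕ, U k = {x ∈ K | (codings f x).encard = (k : ℕ∞)})
    (k : ℕ) (hk : 1 ≤ k) :
    (∀ x ∈ Set.Icc 0 lam ∩ K,
      ((codings f x).encard = (k : ℕ∞) ↔
        x + 1 - lam ∈ K ∧ (codings f (x + 1 - lam)).encard = (k : ℕ∞))) ∧
    (∀ y ∈ Set.Icc (1 - lam) 1 ∩ K,
      ((codings f y).encard = (k : ℕ∞) ↔
        (codings f (y - (1 - lam))).encard = (k : ℕ∞))) := by
  obtain ⟨hlam0, hlam_lt⟩ := hlam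
  have hlam1 : lam < 1 := lt_one_of_lt_five_sub_sqrt_div_two hlam_lt
  have hlam5 : 5 * lam < 1 + lam ^ 2 := five_mul_lt_one_add_sq hlam_lt
  obtain rfl : f = overlapIFS lam := hf.trans (overlapIFS_eq lam).symm
  refine ⟨fun x ⟨hx, hxK⟩ => ?_, fun y ⟨hy, _⟩ => ?_⟩
  · rw [encard_codings_add_one_sub hlam0 hlam1 hlam5 hx]
    have mem_last_cell : x + 1 - lam ∈ K := add_one_sub_mem_of_le hlam0 hlam1 hlam5 hKcpt
      (hK.trans (union_image_eq_iUnion_image _ K)) hxK hx.2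
    exact (and_iff_right mem_last_cell).symm
  · have hy' : y - (1 - lam) ∈ Set.Icc 0 lam := ⟨by linarith [hy.1], by linarith [hy.2]⟩
    rw [← encard_codings_add_one_sub hlam0 hlam1 hlam5 hy', add_sub_assoc, sub_add_cancel]
end

section
/- No point of K has countably infinitely many codings: if x ∈ K and the set of codings of x is infinite, then the set of codings of x is uncountable. -/
open Filter Topology

/-!
A coding `i` represents the sum of the series `∑ λⁿ d (i n)` with digits `0, 2λ, 3λ - λ², 1 - λ`.
Comparing two codings `i`, `j` of the same point digit by digit, as in column addition, produces a
carry `cₙ`, the difference of the values of the `n`-th tails, with `|cₙ| ≤ 1` and `c₀ = 0`.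
The bound on `λ` leaves only the carries `0` and `±(1 - λ)`, and a nonzero carry appears and
disappears in exactly one way: one coding reads `1 3` where the other reads `2 0`, which is the
exact overlap `f 1 ∘ f 3 = f 2 ∘ f 0`. Occurrences of these two words in `i` never share
a letter, so the codings of a point correspond bijectively to the sets of occurrences in any one of
its codings. A power set is either finite or uncountable.
-/

section Expansion

variable {α : Type*} {r : ℝ} {d : α → ℝ}

/-- The value `∑ rⁿ d (i n)` of the digit sequence `i` in base `r⁻¹`, where the letter `a` stands
for the digit `d a`. -/
noncomputable def expansion (r : ℝ) (d : α → ℝ) (i : ℕ → α) : ℝ :=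
  ∑' n, r ^ n * d (i n)

lemma summable_pow_mul_digit (hr : |r| < 1) (hd : Bornology.IsBounded (Set.range d))
    (i : ℕ → α) : Summable fun n => r ^ n * d (i n) := by
  obtain ⟨C, hC⟩ := hd.exists_norm_le
  refine Summable.of_norm_bounded ((summable_geometric_of_abs_lt_one hr).abs.mul_right C)
    fun n => ?_
  rw [norm_mul, Real.norm_eq_abs (r ^ n)]
  exact mul_le_mul_of_nonneg_left (hC _ ⟨i n, rfl⟩) (abs_nonneg _)

lemma expansion_eq_add_mul (hr : |r| < 1) (hd : Bornology.IsBounded (Set.range d)) (i : ℕ → α) :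
    expansion r d i = d (i 0) + r * expansion r d fun n => i (n + 1) := by
  simp only [expansion, (summable_pow_mul_digit hr hd i).tsum_eq_zero_add, pow_zero, one_mul,
    pow_succ', mul_assoc, tsum_mul_left]

lemma expansion_mem_Icc (hr₀ : 0 ≤ r) (hr₁ : r < 1)
    (hd : ∀ a, d a ∈ Set.Icc 0 (1 - r)) (i : ℕ → α) : expansion r d i ∈ Set.Icc 0 1 := by
  have hgeom : HasSum (fun n : ℕ => r ^ n * (1 - r)) 1 := by
    simpa only [inv_mul_cancel₀ (sub_pos.2 hr₁).ne'] using
      (hasSum_geometric_of_lt_one hr₀ hr₁).mul_right (1 - r)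
  have hbounded : Bornology.IsBounded (Set.range d) :=
    (Metric.isBounded_Icc 0 (1 - r)).subset (Set.range_subset_iff.2 hd)
  have hsum := (summable_pow_mul_digit (abs_lt.2 ⟨by linarith, hr₁⟩) hbounded i).hasSum
  exact ⟨hsum.nonneg fun n => mul_nonneg (pow_nonneg hr₀ n) (hd _).1,
    hasSum_le (fun n => mul_le_mul_of_nonneg_left (hd _).2 (pow_nonneg hr₀ n)) hsum hgeom⟩

/-- The carry into position `n` when the expansions of `i` and `j` are compared digit by digit:
the difference of the values of their `n`-th tails. -/
noncomputable def carry (r : ℝ) (d : α → ℝ) (i j : ℕ → α) (n : ℕ) : ℝ :=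
  expansion r d (fun m => i (m + n)) - expansion r d fun m => j (m + n)

lemma neg_carry (r : ℝ) (d : α → ℝ) (i j : ℕ → α) (n : ℕ) :
    -carry r d i j n = carry r d j i n :=
  neg_sub _ _

lemma carry_eq_sub_add_mul_succ (hr : |r| < 1) (hd : Bornology.IsBounded (Set.range d))
    (i j : ℕ → α) (n : ℕ) :
    carry r d i j n = d (i n) - d (j n) + r * carry r d i j (n + 1) := by
  rw [carry, expansion_eq_add_mul hr hd fun m => i (m + n),
    expansion_eq_add_mul hr hd fun m => j (m + n), carry]
  simp only [zero_add, Nat.add_right_comm _ 1 n, ← Nat.add_assoc]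
  ring

lemma abs_carry_le_one (hr₀ : 0 ≤ r) (hr₁ : r < 1)
    (hd : ∀ a, d a ∈ Set.Icc 0 (1 - r)) (i j : ℕ → α) (n : ℕ) : |carry r d i j n| ≤ 1 := by
  have hi := expansion_mem_Icc hr₀ hr₁ hd fun m => i (m + n)
  have hj := expansion_mem_Icc hr₀ hr₁ hd fun m => j (m + n)
  exact abs_sub_le_of_le_of_le hi.1 hi.2 hj.1 hj.2 |>.trans_eq (sub_zero 1)

lemma expansion_sub_expansion_eq_of_bounded_recurrence (hr : |r| < 1)
    (hd : Bornology.IsBounded (Set.range d)) {i j : ℕ → α} {c : ℕ → ℝ} {C : ℝ} (hC : ∀ n, |c n| ≤ C)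
    (hc : ∀ n, c n = d (i n) - d (j n) + r * c (n + 1)) :
    expansion r d i - expansion r d j = c 0 := by
  have hpartial (n : ℕ) : ∑ k ∈ Finset.range n, (r ^ k * d (i k) - r ^ k * d (j k)) =
      c 0 - r ^ n * c n := by
    rw [← one_mul (c 0), ← pow_zero r, ← Finset.sum_range_sub' fun k => r ^ k * c k]
    refine Finset.sum_congr rfl fun k _ => ?_
    rw [hc k]
    ring
  have hvanish : Tendsto (fun n => r ^ n * c n) atTop (𝓝 0) :=
    (tendsto_pow_atTop_nhds_zero_of_abs_lt_one hr).zero_mul_isBoundedUnder_le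
      (isBoundedUnder_of ⟨C, hC⟩)
  have hlim : Tendsto (fun n => c 0 - r ^ n * c n) atTop (𝓝 (c 0)) := by
    simpa only [sub_zero] using hvanish.const_sub (c 0)
  have hsum := ((summable_pow_mul_digit hr hd i).hasSum.sub
    (summable_pow_mul_digit hr hd j).hasSum).tendsto_sum_nat
  exact tendsto_nhds_unique hsum (hlim.congr fun n => (hpartial n).symm)

end Expansion

section AffineIFS

variable {r : ℝ} {d : Fin 4 → ℝ} {f : Fin 4 → ℝ → ℝ}

lemma codingApprox_eq_sum (hf : ∀ a x, f a x = r * x + d a) (i : ℕ → Fin 4) (n : ℕ) :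
    codingApprox f i n = ∑ k ∈ Finset.range n, r ^ k * d (i k) := by
  induction n generalizing i with
  | zero => rfl
  | succ n ih =>
    simp only [codingApprox, hf, ih, Finset.sum_range_succ', Finset.mul_sum, pow_succ', pow_zero,
      one_mul, mul_assoc]

lemma mem_codings_iff_expansion_eq (hr : |r| < 1) (hf : ∀ a x, f a x = r * x + d a)
    {i : ℕ → Fin 4} {x : ℝ} : i ∈ codings f x ↔ expansion r d i = x := by
  have hlim : Tendsto (codingApprox f i) atTop (𝓝 (expansion r d i)) :=
    (summable_pow_mul_digit hr (Set.finite_range d).isBounded i).hasSum.tendsto_sum_nat.congr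
      fun n => (codingApprox_eq_sum hf i n).symm
  exact ⟨tendsto_nhds_unique hlim, fun h => h ▸ hlim⟩

end AffineIFS

section Switching

variable {i : ℕ → Fin 4} {T : Set ℕ} {n : ℕ}

/-- The positions at which one of the words `1 3` and `2 0` starts in `i`. These two words have the
same value and can be exchanged; in the 1-based numbering of the maps they are `24` and `31`. -/
def switchPositions (i : ℕ → Fin 4) : Set ℕ :=
  {n | (i n = 1 ∧ i (n + 1) = 3) ∨ (i n = 2 ∧ i (n + 1) = 0)}

open Classical in
/-- Exchange the words `1 3` and `2 0` in `i` at the positions in `T ⊆ switchPositions i`. Since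
`Fin.rev` swaps `1` with `2` and `3` with `0`, this amounts to reversing both letters. -/
noncomputable def switchAt (i : ℕ → Fin 4) (T : Set ℕ) : ℕ → Fin 4 :=
  (T ∪ (· + 1) '' T).piecewise (fun n => (i n).rev) i

lemma switchAt_of_mem (hn : n ∈ T ∪ (· + 1) '' T) : switchAt i T n = (i n).rev :=
  if_pos hn

lemma switchAt_of_notMem (hn : n ∉ T ∪ (· + 1) '' T) : switchAt i T n = i n :=
  if_neg hn

lemma succ_notMem_switchPositions (hn : n ∈ switchPositions i) : n + 1 ∉ switchPositions i := by
  rcases hn with ⟨-, hn⟩ | ⟨-, hn⟩ <;> simp [switchPositions, hn]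

lemma notMem_image_succ_of_mem_switchPositions (hT : T ⊆ switchPositions i)
    (hn : n ∈ switchPositions i) : n ∉ (· + 1) '' T := by
  rintro ⟨m, hm, rfl⟩
  exact succ_notMem_switchPositions (hT hm) hn

lemma rev_ne_self (a : Fin 4) : a.rev ≠ a := by
  decide +revert

lemma switchAt_ne_iff_mem (hT : T ⊆ switchPositions i) (hn : n ∈ switchPositions i) :
    switchAt i T n ≠ i n ↔ n ∈ T := by
  refine ⟨fun hne => by_contra fun hnT => hne (switchAt_of_notMem ?_), fun hnT => ?_⟩
  · exact fun h => h.elim hnT (notMem_image_succ_of_mem_switchPositions hT hn)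
  · rw [switchAt_of_mem (Or.inl hnT)]
    exact rev_ne_self _

lemma injOn_switchAt (i : ℕ → Fin 4) : Set.InjOn (switchAt i) (𝒫 (switchPositions i)) := by
  have hsubset {S T : Set ℕ} (hS : S ⊆ switchPositions i) (hT : T ⊆ switchPositions i)
      (h : switchAt i S = switchAt i T) : S ⊆ T := fun n hn =>
    (switchAt_ne_iff_mem hT (hS hn)).1 (h ▸ (switchAt_ne_iff_mem hS (hS hn)).2 hn)
  exact fun S hS T hT h => (hsubset hS hT h).antisymm (hsubset hT hS h.symm)

end Switching

section Digits

variable {l : ℝ} {p q : Fin 4} {i j : ℕ → Fin 4} {T : Set ℕ} {n : ℕ}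

/-- The translation parts of the maps `f₁, …, f₄`, indexed from `0`. -/
def digit (l : ℝ) : Fin 4 → ℝ := ![0, 2 * l, 3 * l - l ^ 2, 1 - l]

lemma five_mul_lt_one_add_sq_s14 (hl : l < (5 - √21) / 2) : 5 * l < 1 + l ^ 2 := by
  have hsqrt : √21 < 5 - 2 * l := by linarith
  have hsq : 21 < (5 - 2 * l) ^ 2 := Real.lt_sq_of_sqrt_lt hsqrt
  linarith

lemma ratio_lt_one (hl : l < (5 - √21) / 2) : l < 1 := by
  have hsqrt : 3 < √21 := Real.lt_sqrt_of_sq_lt (by norm_num)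
  linarith

lemma abs_ratio_lt_one (hl : l ∈ Set.Ioo 0 ((5 - √21) / 2)) : |l| < 1 :=
  abs_lt.2 ⟨by linarith [hl.1], ratio_lt_one hl.2⟩

lemma sq_ratio_lt_self (hl : l ∈ Set.Ioo 0 ((5 - √21) / 2)) : l ^ 2 < l :=
  pow_lt_self_of_lt_one₀ hl.1 (ratio_lt_one hl.2) one_lt_two

lemma digit_mem_Icc (hl : l ∈ Set.Ioo 0 ((5 - √21) / 2)) (a : Fin 4) :
    digit l a ∈ Set.Icc 0 (1 - l) := by
  have hsep := five_mul_lt_one_add_sq_s14 hl.2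
  have hsq := sq_ratio_lt_self hl
  have hpos := hl.1
  constructor <;> fin_cases a <;> simp [digit] <;> linarith

lemma abs_carry_digit_le_one (hl : l ∈ Set.Ioo 0 ((5 - √21) / 2)) (i j : ℕ → Fin 4) (n : ℕ) :
    |carry l (digit l) i j n| ≤ 1 :=
  abs_carry_le_one hl.1.le (ratio_lt_one hl.2) (digit_mem_Icc hl) i j n

lemma carry_digit_eq_sub_add_mul_succ (hl : l ∈ Set.Ioo 0 ((5 - √21) / 2)) (i j : ℕ → Fin 4)
    (n : ℕ) : carry l (digit l) i j n =
      digit l (i n) - digit l (j n) + l * carry l (digit l) i j (n + 1) :=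
  carry_eq_sub_add_mul_succ (abs_ratio_lt_one hl) (Set.finite_range _).isBounded i j n

lemma eq_one_and_eq_two_of_digit_sub_le (hl : l ∈ Set.Ioo 0 ((5 - √21) / 2)) (hpq : p < q)
    (h : digit l q - digit l p ≤ l) : p = 1 ∧ q = 2 := by
  have hsep := five_mul_lt_one_add_sq_s14 hl.2
  have hsq := sq_ratio_lt_self hl
  have hpos := hl.1
  fin_cases p <;> fin_cases q <;> simp [digit] at h hpq ⊢ <;> linarith

lemma eq_three_and_eq_zero_of_le_digit_sub (hl : l ∈ Set.Ioo 0 ((5 - √21) / 2))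
    (h : 1 - 2 * l ≤ digit l p - digit l q) : p = 3 ∧ q = 0 := by
  have hsep := five_mul_lt_one_add_sq_s14 hl.2
  have hsq := sq_ratio_lt_self hl
  have hpos := hl.1
  fin_cases p <;> fin_cases q <;> simp [digit] at h ⊢ <;> linarith

lemma words_eq_of_carry_eq_zero_of_lt (hl : l ∈ Set.Ioo 0 ((5 - √21) / 2))
    (hcarry : carry l (digit l) i j n = 0) (hlt : i n < j n) :
    (i n = 1 ∧ i (n + 1) = 3) ∧ (j n = 2 ∧ j (n + 1) = 0) ∧ carry l (digit l) i j (n + 2) = 0 := by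
  have hstep := carry_digit_eq_sub_add_mul_succ hl i j
  have hbound (m : ℕ) : l * carry l (digit l) i j m ≤ l :=
    mul_le_of_le_one_right hl.1.le (abs_le.1 (abs_carry_digit_le_one hl i j m)).2
  obtain ⟨hi, hj⟩ : i n = 1 ∧ j n = 2 :=
    eq_one_and_eq_two_of_digit_sub_le hl hlt (by linarith [hstep n, hbound (n + 1)])
  have hcarry₁ : carry l (digit l) i j (n + 1) = 1 - l := by
    have hgap : digit l 1 - digit l 2 = -(l * (1 - l)) := by simp [digit]; ring
    have h := hstep n
    rw [hcarry, hi, hj, hgap] at h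
    exact mul_left_cancel₀ hl.1.ne' (by linarith)
  obtain ⟨hi', hj'⟩ : i (n + 1) = 3 ∧ j (n + 1) = 0 :=
    eq_three_and_eq_zero_of_le_digit_sub hl (by linarith [hstep (n + 1), hbound (n + 2)])
  refine ⟨⟨hi, hi'⟩, ⟨hj, hj'⟩, ?_⟩
  have hgap : digit l 3 - digit l 0 = 1 - l := by simp [digit]
  have h := hstep (n + 1)
  rw [hcarry₁, hi', hj', hgap] at h
  exact (mul_eq_zero.1 (by linarith)).resolve_left hl.1.ne'

lemma switch_of_carry_eq_zero_of_ne (hl : l ∈ Set.Ioo 0 ((5 - √21) / 2))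
    (hcarry : carry l (digit l) i j n = 0) (hne : i n ≠ j n) :
    n ∈ switchPositions i ∧ j n = (i n).rev ∧ j (n + 1) = (i (n + 1)).rev ∧
      carry l (digit l) i j (n + 2) = 0 := by
  rcases hne.lt_or_gt with hlt | hgt
  · obtain ⟨hi, ⟨hj, hj'⟩, hcarry₂⟩ := words_eq_of_carry_eq_zero_of_lt hl hcarry hlt
    exact ⟨Or.inl hi, by rw [hi.1, hj]; rfl, by rw [hi.2, hj']; rfl, hcarry₂⟩
  · rw [← neg_carry, neg_eq_zero] at hcarry
    obtain ⟨⟨hj, hj'⟩, hi, hcarry₂⟩ := words_eq_of_carry_eq_zero_of_lt hl hcarry hgt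
    exact ⟨Or.inr hi, by rw [hi.1, hj]; rfl, by rw [hi.2, hj']; rfl,
      by rw [← neg_carry, hcarry₂, neg_zero]⟩

lemma exists_switchAt_eq_of_expansion_eq (hl : l ∈ Set.Ioo 0 ((5 - √21) / 2))
    (hij : expansion l (digit l) i = expansion l (digit l) j) :
    ∃ T ⊆ switchPositions i, switchAt i T = j := by
  let T : Set ℕ := {n | carry l (digit l) i j n = 0 ∧ i n ≠ j n}
  have hswitch {n : ℕ} (hn : n ∈ T) := switch_of_carry_eq_zero_of_ne hl hn.1 hn.2
  have hcarry (n : ℕ) : carry l (digit l) i j n = 0 ∨ n ∈ (· + 1) '' T := by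
    induction n with
    | zero => exact Or.inl (sub_eq_zero.2 hij)
    | succ n ih =>
      rcases ih with hzero | ⟨m, hm, rfl⟩
      · by_cases hne : i n = j n
        · left
          have h := carry_digit_eq_sub_add_mul_succ hl i j n
          rw [hzero, hne, sub_self, zero_add, eq_comm] at h
          exact (mul_eq_zero.1 h).resolve_left hl.1.ne'
        · exact Or.inr ⟨n, ⟨hzero, hne⟩, rfl⟩
      · exact Or.inl (hswitch hm).2.2.2
  refine ⟨T, fun n hn => (hswitch hn).1, funext fun n => ?_⟩
  by_cases hn : n ∈ T ∪ (· + 1) '' T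
  · rw [switchAt_of_mem hn]
    rcases hn with hn | ⟨m, hm, rfl⟩
    · exact (hswitch hn).2.1.symm
    · exact (hswitch hm).2.2.1.symm
  · rw [switchAt_of_notMem hn]
    have hzero := (hcarry n).resolve_right fun h => hn (Or.inr h)
    exact by_contra fun hne => hn (Or.inl ⟨hzero, hne⟩)

lemma digit_sub_rev_add_mul_eq_zero (l : ℝ) (hn : n ∈ switchPositions i) :
    digit l (i n) - digit l (i n).rev +
      l * (digit l (i (n + 1)) - digit l (i (n + 1)).rev) = 0 := by
  rcases hn with ⟨hn, hn'⟩ | ⟨hn, hn'⟩ <;> simp [hn, hn', digit, Fin.rev] <;> ring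

/-- The carry between `i` and `switchAt i T`: it is nonzero exactly between the two letters of an
exchanged word, where it equals the difference of the second digits. -/
noncomputable def switchCarry (l : ℝ) (i : ℕ → Fin 4) (T : Set ℕ) : ℕ → ℝ :=
  ((· + 1) '' T).indicator fun n => digit l (i n) - digit l (i n).rev

lemma switchCarry_of_mem (hn : n ∈ (· + 1) '' T) :
    switchCarry l i T n = digit l (i n) - digit l (i n).rev :=
  Set.indicator_of_mem hn _

lemma switchCarry_of_notMem (hn : n ∉ (· + 1) '' T) : switchCarry l i T n = 0 :=
  Set.indicator_of_notMem hn _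

lemma switchCarry_eq_sub_add_mul_succ (hT : T ⊆ switchPositions i) (n : ℕ) :
    switchCarry l i T n =
      digit l (i n) - digit l (switchAt i T n) + l * switchCarry l i T (n + 1) := by
  have hsucc : n + 1 ∈ (· + 1) '' T ↔ n ∈ T := (add_left_injective 1).mem_set_image
  by_cases hnT : n ∈ T
  · have hn : n ∉ (· + 1) '' T := notMem_image_succ_of_mem_switchPositions hT (hT hnT)
    rw [switchCarry_of_notMem hn, switchAt_of_mem (Or.inl hnT), switchCarry_of_mem (hsucc.2 hnT),
      digit_sub_rev_add_mul_eq_zero l (hT hnT)]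
  · rw [switchCarry_of_notMem (mt hsucc.1 hnT), mul_zero, add_zero]
    by_cases hn : n ∈ (· + 1) '' T
    · rw [switchCarry_of_mem hn, switchAt_of_mem (Or.inr hn)]
    · rw [switchCarry_of_notMem hn, switchAt_of_notMem fun h => h.elim hnT hn, sub_self]

lemma expansion_switchAt (hl : |l| < 1) (hT : T ⊆ switchPositions i) :
    expansion l (digit l) (switchAt i T) = expansion l (digit l) i := by
  obtain ⟨C, hC⟩ := (Set.finite_range fun a => |digit l a - digit l a.rev|).bddAbove
  have hbound (n : ℕ) : |switchCarry l i T n| ≤ C :=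
    (norm_indicator_le_norm_self (fun n => digit l (i n) - digit l (i n).rev) n).trans
      (hC ⟨i n, rfl⟩)
  have hzero : switchCarry l i T 0 = 0 := switchCarry_of_notMem (by simp)
  have hdiff := expansion_sub_expansion_eq_of_bounded_recurrence hl
    (Set.finite_range (digit l)).isBounded hbound (switchCarry_eq_sub_add_mul_succ hT)
  exact (sub_eq_zero.1 (hdiff.trans hzero)).symm

theorem bijOn_switchAt_codings (hl : l ∈ Set.Ioo 0 ((5 - √21) / 2)) {f : Fin 4 → ℝ → ℝ}
    (hf : ∀ a y, f a y = l * y + digit l a) {x : ℝ} (hi : i ∈ codings f x) :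
    Set.BijOn (switchAt i) (𝒫 (switchPositions i)) (codings f x) := by
  have hmem {j : ℕ → Fin 4} := mem_codings_iff_expansion_eq (i := j) (x := x)
    (abs_ratio_lt_one hl) hf
  refine ⟨fun T hT => ?_, injOn_switchAt i, fun j hj => ?_⟩
  · rw [hmem, expansion_switchAt (abs_ratio_lt_one hl) hT, hmem.1 hi]
  · exact exists_switchAt_eq_of_expansion_eq hl ((hmem.1 hi).trans (hmem.1 hj).symm)

end Digits

lemma not_countable_powerset {α : Type*} {s : Set α} (hs : s.Infinite) : ¬ (𝒫 s).Countable := by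
  rw [← Cardinal.le_aleph0_iff_set_countable, Cardinal.mk_powerset, not_le]
  exact (Cardinal.aleph0_le_mk_iff.2 hs.to_subtype).trans_lt (Cardinal.cantor _)

/-- no point of `K` has countably infinitely many codings: if the set of
codings of `x ∈ K` is infinite, then it is uncountable. -/
theorem statement14
    (lam : ℝ) (hlam : 0 < lam ∧ lam < (5 - Real.sqrt 21) / 2)
    (f : Fin 4 → ℝ → ℝ)
    (hf : f = ![fun x => lam * x, fun x => lam * x + 2 * lam,
      fun x => lam * x + 3 * lam - lam ^ 2, fun x => lam * x + 1 - lam])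
    (K : Set ℝ) (hKne : K.Nonempty) (hKcpt : IsCompact K)
    (hK : K = f 0 '' K ∪ f 1 '' K ∪ f 2 '' K ∪ f 3 '' K)
    (U : ℕ → Set ℝ)
    (hU : ∀ k : ℕ, U k = {x ∈ K | (codings f x).encard = (k : ℕ∞)})
    (x : ℝ) (hx : x ∈ K) (hinf : (codings f x).Infinite) :
    ¬ (codings f x).Countable := by
  have hdigit (a : Fin 4) (y : ℝ) : f a y = lam * y + digit lam a := by
    subst hf
    fin_cases a <;> simp [digit] <;> ring
  obtain ⟨i, hi⟩ := hinf.nonempty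
  have hbij := bijOn_switchAt_codings hlam hdigit hi
  have hpositions : (switchPositions i).Infinite := fun hfin =>
    hinf (hbij.finite_iff_finite.1 hfin.powerset)
  exact fun hcount => not_countable_powerset hpositions <|
    Set.countable_of_injective_of_countable_image hbij.injOn (hbij.image_eq.symm ▸ hcount)
end
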